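/- Let G be an abelian group, let D be a divisible subgroup of G, and let N be a positive integer such that N·g ∈ D for every g ∈ G (i.e. the quotient G/D is killed by N). Suppose moreover that the N-torsion subgroup {g ∈ G : N·g = 0} is finite. Then G is the internal direct sum of D and a finite subgroup; in particular, G is the direct sum of a divisible group and a finite group. -/

import Mathlib

/-!
A divisible group is an injective `ℤ`-module, so the identity of `D` extends to a retraction
`G → D`, whose kernel `F` is a complement of `D`. For `x ∈ F`, the multiple `N • x` lies both in
`F` and in `D`, hence vanishes: `F` is contained in the finite `N`-torsion of `G`.
-/

theorem exists_isCompl_of_baer {R M : Type*} [Ring R] [AddCommGroup M] [Module R M]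
    (p : Submodule R M) (hp : Module.Baer R p) : ∃ q : Submodule R M, IsCompl p q := by
  obtain ⟨r, hr⟩ := hp.extension_property p.subtype p.subtype_injective LinearMap.id
  exact ⟨r.ker, LinearMap.isCompl_of_proj (LinearMap.congr_fun hr)⟩

theorem exists_isCompl_of_divisibleBy {G : Type*} [AddCommGroup G] (D : AddSubgroup G)
    [DivisibleBy D ℤ] : ∃ F : AddSubgroup G, IsCompl D F := by
  obtain ⟨q, hq⟩ := exists_isCompl_of_baer (AddSubgroup.toIntSubmodule D)
    (Module.Baer.of_divisible D)
  exact ⟨q.toAddSubgroup, AddSubgroup.toIntSubmodule.symm.isCompl hq⟩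

theorem nsmul_eq_zero_of_disjoint {G : Type*} [AddGroup G] {D F : AddSubgroup G}
    (hDF : Disjoint D F) {n : ℕ} {x : G} (hxD : n • x ∈ D) (hxF : x ∈ F) : n • x = 0 :=
  AddSubgroup.disjoint_def.mp hDF hxD (F.nsmul_mem hxF n)

/-- If `D` is a divisible subgroup of an abelian group `G` with `G/D` killed by a
positive integer `N`, and the `N`-torsion subgroup of `G` is finite, then `G` is the
internal direct sum of `D` and a finite subgroup. -/
theorem direct_sum_divisible_finite_of_bounded_quotient
    {G : Type*} [AddCommGroup G] (D : AddSubgroup G)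
    (hD : ∀ d ∈ D, ∀ n : ℕ, 0 < n → ∃ d' ∈ D, n • d' = d)
    (N : ℕ) (hN : 0 < N) (hquot : ∀ g : G, N • g ∈ D)
    (htors : {g : G | N • g = 0}.Finite) :
    ∃ F : AddSubgroup G, (F : Set G).Finite ∧ D ⊓ F = ⊥ ∧ D ⊔ F = ⊤ := by
  have surjective_nsmul {n : ℕ} (hn : n ≠ 0) : Function.Surjective fun d : D => n • d := by
    intro d
    obtain ⟨d', hd', h⟩ := hD d d.2 n (Nat.pos_of_ne_zero hn)
    exact ⟨⟨d', hd'⟩, Subtype.ext h⟩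
  let _ : DivisibleBy D ℕ := divisibleByOfSMulRightSurj D ℕ surjective_nsmul
  let _ : DivisibleBy D ℤ := AddGroup.divisibleByIntOfDivisibleByNat D
  obtain ⟨F, hF⟩ := exists_isCompl_of_divisibleBy D
  have F_subset_torsion : (F : Set G) ⊆ {g : G | N • g = 0} := fun x hx =>
    nsmul_eq_zero_of_disjoint hF.disjoint (hquot x) hx
  exact ⟨F, htors.subset F_subset_torsion, hF.inf_eq_bot, hF.sup_eq_top⟩
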